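/- arXiv:2312.13867 — 6 statements merged into one kernel-verified Lean document; each statement's English description precedes it below -/
import Mathlib

section
/- Abstract joint compatibility condition (Lemma 3.5, abelian-group case, evaluation form): for every compatible cyclic family (μ_i, d_i, v_i)_{i∈ℤ/n} with values in an abelian group A, and for every w ∈ M, one has Σ_{i∈ℤ/n} d_i(w) • a_i = 0 in A, where a_i := μ_i(v_i) − μ_{i−1}(v_i) (the additive form of a_i = μ_{i−1}(−v_i) + μ_i(v_i)). -/
/-!
Abstract joint compatibility condition (Lemma 3.5 of "How to make log structures",
abelian-group case, evaluation form).

`M = ℤ × ℤ`, `A` an abelian group, `n ≥ 1` (encoded via `[NeZero n]`, cyclic index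
set `ZMod n`).  A compatible cyclic family consists of group homomorphisms
`μ i : M →+ A`, surjective homomorphisms `d i : M →+ ℤ`, and elements `v i ∈ M`
with `d i (v i) = 1`, such that `μ (i - 1)` and `μ i` agree on `ker (d i)`.
Setting `a i = μ i (v i) - μ (i - 1) (v i)`, for every `w ∈ M` one has
`∑ i, d i w • a i = 0` in `A`.
-/

theorem abstract_joint_compatibility_eval
    (n : ℕ) [NeZero n] (A : Type*) [AddCommGroup A]
    (μ : ZMod n → (ℤ × ℤ) →+ A)
    (d : ZMod n → (ℤ × ℤ) →+ ℤ)
    (v : ZMod n → ℤ × ℤ)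
    (hd : ∀ i, Function.Surjective (d i))
    (hv : ∀ i, d i (v i) = 1)
    (hcompat : ∀ i : ZMod n, ∀ m : ℤ × ℤ, d i m = 0 → μ (i - 1) m = μ i m)
    (w : ℤ × ℤ) :
    ∑ i : ZMod n, d i w • (μ i (v i) - μ (i - 1) (v i)) = 0 := by
  -- `w - d i w • v i` lies in `ker (d i)`, so each term is `μ i w - μ (i - 1) w`,
  -- and these differences telescope around the cycle.
  have key : ∀ i, d i w • (μ i (v i) - μ (i - 1) (v i)) = μ i w - μ (i - 1) w := by
    intro i
    have h := hcompat i (w - d i w • v i) (by rw [map_sub, map_zsmul, hv, smul_eq_mul, mul_one, sub_self])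
    simp only [map_sub, map_zsmul] at h
    rw [smul_sub, sub_eq_sub_iff_sub_eq_sub, ← neg_inj, neg_sub, neg_sub]
    exact h.symm
  simp only [key, Finset.sum_sub_distrib]
  rw [sub_eq_zero]
  exact ((Equiv.subRight (1 : ZMod n)).sum_comp fun i => μ i w).symm
end

section
/- Abstract joint compatibility condition (Lemma 3.5, abelian-group case, tensor form, equation (3.3)): for every compatible cyclic family (μ_i, d_i, v_i)_{i∈ℤ/n} with values in an abelian group A, one has Σ_{i∈ℤ/n} a_i ⊗ d_i = 0 in the tensor product of ℤ-modules A ⊗_ℤ N, where a_i := μ_i(v_i) − μ_{i−1}(v_i). -/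
/-!
The difference `μ i - μ (i - 1)` vanishes on `ker (d i)`, and `m - d i m • v i` lies in that kernel,
so `μ i m - μ (i - 1) m = d i m • a i` for every `m`, where `a i = μ i (v i) - μ (i - 1) (v i)`.
Expanding `d i` in the basis dual to `(1, 0), (0, 1)` and moving its coefficients across the tensor
sign turns `a i ⊗ d i` into `t i - t (i - 1)`, where `t i = μ i (1, 0) ⊗ fst + μ i (0, 1) ⊗ snd`
is the tensor of `μ i` under `Hom(M, A) ≅ A ⊗ N`. The sum over the cycle `ZMod n` then telescopes
to zero.
-/

open TensorProduct

theorem abstract_joint_compatibility_tensor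
    (n : ℕ) [NeZero n] (A : Type*) [AddCommGroup A]
    (μ : ZMod n → (ℤ × ℤ) →+ A)
    (d : ZMod n → (ℤ × ℤ) →+ ℤ)
    (v : ZMod n → ℤ × ℤ)
    (hd : ∀ i, Function.Surjective (d i))
    (hv : ∀ i, d i (v i) = 1)
    (hcompat : ∀ i : ZMod n, ∀ m : ℤ × ℤ, d i m = 0 → μ (i - 1) m = μ i m) :
    ∑ i : ZMod n,
      (μ i (v i) - μ (i - 1) (v i)) ⊗ₜ[ℤ] (d i) = (0 : A ⊗[ℤ] ((ℤ × ℤ) →+ ℤ)) := by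
  have key : ∀ i m, d i m • (μ i (v i) - μ (i - 1) (v i)) = μ i m - μ (i - 1) m := by
    intro i m
    have h := hcompat i (m - d i m • v i) (by rw [map_sub, map_zsmul, hv, smul_eq_mul, mul_one, sub_self])
    simp only [map_sub, map_zsmul] at h
    rw [smul_sub, sub_eq_sub_iff_sub_eq_sub, ← neg_sub (μ i m), ← neg_sub (μ (i - 1) m), h]
  have hdual : ∀ f : (ℤ × ℤ) →+ ℤ,
      f = f (1, 0) • AddMonoidHom.fst ℤ ℤ + f (0, 1) • AddMonoidHom.snd ℤ ℤ := by
    intro f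
    ext ⟨x, y⟩
    have hxy : ((x, y) : ℤ × ℤ) = x • (1, 0) + y • (0, 1) := by ext <;> simp
    have h : f (x, y) = x • f (1, 0) + y • f (0, 1) := by
      rw [← map_zsmul, ← map_zsmul, ← map_add, ← hxy]
    simpa [mul_comm] using h
  let t : ZMod n → A ⊗[ℤ] ((ℤ × ℤ) →+ ℤ) := fun i =>
    μ i (1, 0) ⊗ₜ[ℤ] AddMonoidHom.fst ℤ ℤ + μ i (0, 1) ⊗ₜ[ℤ] AddMonoidHom.snd ℤ ℤ
  have hterm : ∀ i, (μ i (v i) - μ (i - 1) (v i)) ⊗ₜ[ℤ] (d i) = t i - t (i - 1) := by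
    intro i
    conv_lhs => rw [hdual (d i)]
    rw [tmul_add, ← smul_tmul, ← smul_tmul, key, key, sub_tmul, sub_tmul]
    simp only [t]
    abel
  rw [Finset.sum_congr rfl fun i _ => hterm i, Finset.sum_sub_distrib, sub_eq_zero]
  exact (Equiv.sum_comp (Equiv.subRight (1 : ZMod n)) t).symm
end

section
/- Flatness of the quartic del Pezzo deformation (§5.1.2, item (1)): for arbitrary parameters s₀, s₁, a₁, a₂, b₁, b₂, c₂, c₃, c₄ ∈ k, the quotient ring k[x, y, z, u, w, t]/(F₁, F₂), regarded as a module over the polynomial subring k[t] generated by t, is flat. -/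
/-!
Over the principal ideal domain `k[t]` flat means torsion-free, so for each prime `p ∈ k[t]` it
has to be shown that `p g ∈ (F₁, F₂)` implies `g ∈ (F₁, F₂)`.

Put `B = k[t][x, y, z, u]`. Up to sign `F₁` is a monic quadratic `w² + s w - n` in `B[w]`, and
`F₂ = z w - e` with `z, e ∈ B`. Multiplying `F₂` by its conjugate `z (-s - w) - e` gives, modulo
`F₁`, the norm `N = e² + e z s - z² n ∈ B`. The coefficient of `x y z²` in `N` is `-1`, so `p ∤ N`
for every prime `p` (`dP4_not_dvd_norm`; this is where the shape of the equations enters).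
Since `B[w]/(F₁)` is free over `B` and `p` is prime in `B`, it follows that `F₂` is a
nonzerodivisor modulo `(F₁, p)`. As `F₁` is itself not divisible by `p`, the factor `p` can be
cancelled in any relation `p g = a F₁ + b F₂` (`cancel_prime_of_norm`).
-/

/-!
Flatness of the quartic del Pezzo deformation (§5.1.2, item (1), of
"How to make log structures").

In `k[x, y, z, u, w, t]` (encoded as `MvPolynomial (Fin 6) k` with
`x = X 0`, `y = X 1`, `z = X 2`, `u = X 3`, `w = X 4`, `t = X 5`) consider the
ideal generated by
`F₁ = xy − w² − t·s₁·w·u − t²·(c₂u² + c₃uz + c₄z²)` and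
`F₂ = zw − t·(s₀u² + a₁xu + a₂x² + b₁yu + b₂y²)`.
The quotient ring, regarded as a module over the polynomial subring `k[t]`
generated by `t` (i.e. via the ring homomorphism `Polynomial k → quotient`
sending the polynomial variable to the class of `t`), is flat.
-/

open MvPolynomial

noncomputable def dP4Ideal (k : Type*) [Field k] (s₀ s₁ a₁ a₂ b₁ b₂ c₂ c₃ c₄ : k) :
    Ideal (MvPolynomial (Fin 6) k) :=
  Ideal.span
    { X 0 * X 1 - X 4 ^ 2 - X 5 * C s₁ * X 4 * X 3
        - X 5 ^ 2 * (C c₂ * X 3 ^ 2 + C c₃ * X 3 * X 2 + C c₄ * X 2 ^ 2),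
      X 2 * X 4 - X 5 * (C s₀ * X 3 ^ 2 + C a₁ * X 0 * X 3 + C a₂ * X 0 ^ 2
        + C b₁ * X 1 * X 3 + C b₂ * X 1 ^ 2) }

/-- Cancellation of a prime `π` modulo a monic quadratic `F = w² + s w - n` and a linear
polynomial `G = z w - e`, when `π` does not divide the norm `e² + e z s - z² n` of `G` modulo
`F`. -/
lemma cancel_prime_of_norm {B : Type*} [CommRing B] [IsDomain B] (s n z e π : B)
    (hπ : Prime π) (hN : ¬ π ∣ e ^ 2 + e * z * s - z ^ 2 * n) (g a b : Polynomial B)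
    (h : Polynomial.C π * g =
      a * (Polynomial.X ^ 2 + (Polynomial.C s * Polynomial.X - Polynomial.C n)) +
      b * (Polynomial.C z * Polynomial.X - Polynomial.C e)) :
    ∃ c d : Polynomial B,
      g = c * (Polynomial.X ^ 2 + (Polynomial.C s * Polynomial.X - Polynomial.C n)) +
        d * (Polynomial.C z * Polynomial.X - Polynomial.C e) := by
  set F : Polynomial B :=
    Polynomial.X ^ 2 + (Polynomial.C s * Polynomial.X - Polynomial.C n) with hF
  set G : Polynomial B := Polynomial.C z * Polynomial.X - Polynomial.C e with hG
  set N : B := e ^ 2 + e * z * s - z ^ 2 * n with hNdef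
  have hmonic : F.Monic := by
    apply Polynomial.monic_X_pow_add
    compute_degree!
  have hCπ : Prime (Polynomial.C π) := Polynomial.prime_C_iff.mpr hπ
  -- The conjugate of `G` under `w ↦ -s - w`.
  set Gconj : Polynomial B :=
    Polynomial.C z * (-Polynomial.C s - Polynomial.X) - Polynomial.C e with hConj
  have hGconj : G * Gconj = Polynomial.C N - Polynomial.C z ^ 2 * F := by
    simp only [hG, hConj, hNdef, hF, map_sub, map_add, map_mul, map_pow]
    ring
  have hbN : N • b = π • (g * Gconj) + (b * Polynomial.C z ^ 2 - a * Gconj) * F := by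
    rw [Polynomial.smul_eq_C_mul, Polynomial.smul_eq_C_mul]
    linear_combination (-b) * hGconj - Gconj * h
  -- Taking remainders modulo the monic `F` is `B`-linear.
  have hrem : N • (b %ₘ F) = π • ((g * Gconj) %ₘ F) := by
    rw [← Polynomial.smul_modByMonic, hbN, Polynomial.add_modByMonic,
      Polynomial.mul_self_modByMonic hmonic, add_zero, Polynomial.smul_modByMonic]
  have hdvd : Polynomial.C π ∣ b %ₘ F := by
    have h1 : Polynomial.C π ∣ Polynomial.C N * (b %ₘ F) :=
      ⟨(g * Gconj) %ₘ F, by simpa only [Polynomial.smul_eq_C_mul] using hrem⟩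
    refine (hCπ.dvd_or_dvd h1).resolve_left fun h2 => hN ?_
    simpa using (Polynomial.C_dvd_iff_dvd_coeff _ _).mp h2 0
  obtain ⟨d, hd⟩ := hdvd
  have hb : b = Polynomial.C π * d + F * (b /ₘ F) := by
    rw [← hd, Polynomial.modByMonic_add_div]
  have h3 : Polynomial.C π * (g - d * G) = (a + (b /ₘ F) * G) * F := by
    linear_combination h + G * hb
  have hnF : ¬ Polynomial.C π ∣ F := fun hdF => hπ.not_isUnit <| by
    have h4 := (Polynomial.C_dvd_iff_dvd_coeff _ _).mp hdF F.natDegree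
    rw [Polynomial.coeff_natDegree, hmonic.leadingCoeff] at h4
    exact isUnit_of_dvd_one h4
  obtain ⟨c, hc⟩ := (hCπ.dvd_or_dvd ⟨_, h3.symm⟩).resolve_right hnF
  refine ⟨c, d, ?_⟩
  have h5 : g - d * G = c * F := by
    apply mul_left_cancel₀ hCπ.ne_zero
    rw [h3, hc]
    ring
  linear_combination h5

section Coordinates

variable {k : Type*} [Field k]

/-- The linear coefficient `s = t s₁ u` of `-F₁ = w² + s w - n`, with `x, y, z, u` encoded as
`X 0, …, X 3` over `k[t]`. -/
noncomputable def dP4S (s₁ : k) : MvPolynomial (Fin 4) (Polynomial k) :=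
  C (Polynomial.X * Polynomial.C s₁) * X 3

/-- The constant term `n = x y - t² (c₂ u² + c₃ u z + c₄ z²)` of `F₁` as a polynomial in `w`. -/
noncomputable def dP4N (c₂ c₃ c₄ : k) : MvPolynomial (Fin 4) (Polynomial k) :=
  X 0 * X 1 - C Polynomial.X ^ 2 * (C (Polynomial.C c₂) * X 3 ^ 2
    + C (Polynomial.C c₃) * X 3 * X 2 + C (Polynomial.C c₄) * X 2 ^ 2)

/-- The element `e = t (s₀ u² + a₁ x u + a₂ x² + b₁ y u + b₂ y²)`, so that `F₂ = z w - e`. -/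
noncomputable def dP4E (s₀ a₁ a₂ b₁ b₂ : k) : MvPolynomial (Fin 4) (Polynomial k) :=
  C Polynomial.X * (C (Polynomial.C s₀) * X 3 ^ 2 + C (Polynomial.C a₁) * X 0 * X 3
    + C (Polynomial.C a₂) * X 0 ^ 2 + C (Polynomial.C b₁) * X 1 * X 3
    + C (Polynomial.C b₂) * X 1 ^ 2)

/-- The norm of `F₂` is not divisible by any prime of `k[t]`: after the specialization
`(x, y, z, u) = (T, 1, 1, 0)` its coefficient at `T` is `-1`. -/
lemma dP4_not_dvd_norm (s₀ s₁ a₁ a₂ b₁ b₂ c₂ c₃ c₄ : k) (p : Polynomial k) (hp : Prime p) :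
    ¬ (C p : MvPolynomial (Fin 4) (Polynomial k)) ∣
      dP4E s₀ a₁ a₂ b₁ b₂ ^ 2 + dP4E s₀ a₁ a₂ b₁ b₂ * X 2 * dP4S s₁
        - X 2 ^ 2 * dP4N c₂ c₃ c₄ := by
  intro hdvd
  have h1 := map_dvd (aeval (R := Polynomial k)
    (![Polynomial.X, 1, 1, 0] : Fin 4 → Polynomial (Polynomial k))) hdvd
  have h2 : aeval (R := Polynomial k)
      (![Polynomial.X, 1, 1, 0] : Fin 4 → Polynomial (Polynomial k))
      (dP4E s₀ a₁ a₂ b₁ b₂ ^ 2 + dP4E s₀ a₁ a₂ b₁ b₂ * X 2 * dP4S s₁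
        - X 2 ^ 2 * dP4N c₂ c₃ c₄) =
      Polynomial.C ((Polynomial.X * Polynomial.C a₂) ^ 2) * Polynomial.X ^ 4
      + Polynomial.C (Polynomial.X ^ 2 * Polynomial.C a₂ * Polynomial.C b₂
        + Polynomial.X ^ 2 * Polynomial.C a₂ * Polynomial.C b₂)
        * Polynomial.X ^ 2
      + Polynomial.C ((Polynomial.X * Polynomial.C b₂) ^ 2
        + Polynomial.X ^ 2 * Polynomial.C c₄) - Polynomial.X := by
    simp [dP4E, dP4S, dP4N, Polynomial.algebraMap_eq]
    ring
  rw [h2, ← algebraMap_eq, AlgHom.commutes, Polynomial.algebraMap_eq,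
    Polynomial.C_dvd_iff_dvd_coeff] at h1
  have h3 := h1 1
  simp only [Polynomial.coeff_add, Polynomial.coeff_sub, Polynomial.coeff_C_mul,
    Polynomial.coeff_X_pow, Polynomial.coeff_C, Polynomial.coeff_X_one] at h3
  norm_num at h3
  exact hp.not_isUnit (isUnit_of_dvd_one h3)

/-- The map `k[x, y, z, u, w, t] → k[t][x, y, z, u][w]`. -/
noncomputable def dP4Regroup :
    MvPolynomial (Fin 6) k →ₐ[k] Polynomial (MvPolynomial (Fin 4) (Polynomial k)) :=
  aeval ![Polynomial.C (X 0), Polynomial.C (X 1), Polynomial.C (X 2), Polynomial.C (X 3),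
    Polynomial.X, Polynomial.C (C Polynomial.X)]

/-- The map `k[t][x, y, z, u][w] → k[x, y, z, u, w, t]` inverse to `dP4Regroup`. -/
noncomputable def dP4Flatten :
    Polynomial (MvPolynomial (Fin 4) (Polynomial k)) →+* MvPolynomial (Fin 6) k :=
  Polynomial.eval₂RingHom
    (eval₂Hom (Polynomial.aeval (R := k) (X 5 : MvPolynomial (Fin 6) k)).toRingHom
      ![X 0, X 1, X 2, X 3]) (X 4)

lemma dP4Flatten_regroup (f : MvPolynomial (Fin 6) k) : dP4Flatten (dP4Regroup f) = f := by
  have h : (dP4Flatten (k := k)).comp (dP4Regroup (k := k)).toRingHom = RingHom.id _ := by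
    apply MvPolynomial.ringHom_ext
    · intro r
      simp [dP4Flatten, dP4Regroup, Polynomial.algebraMap_apply, MvPolynomial.algebraMap_apply]
    · intro i
      fin_cases i <;> simp [dP4Flatten, dP4Regroup]
  exact congrArg (fun φ => φ f) h

lemma dP4Regroup_aeval (p : Polynomial k) :
    dP4Regroup (Polynomial.aeval (X 5 : MvPolynomial (Fin 6) k) p) = Polynomial.C (C p) := by
  rw [← Polynomial.aeval_algHom_apply]
  have h5 : dP4Regroup (k := k) (X 5) = Polynomial.C (C Polynomial.X) := by
    simp [dP4Regroup]
  rw [h5]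
  induction p using Polynomial.induction_on' with
  | add p q hp hq => simp [hp, hq]
  | monomial n a =>
    rw [Polynomial.aeval_monomial, ← Polynomial.C_mul_X_pow_eq_monomial]
    simp [Polynomial.algebraMap_apply, MvPolynomial.algebraMap_apply]

lemma dP4Regroup_F₁ (s₁ c₂ c₃ c₄ : k) :
    dP4Regroup (X 0 * X 1 - X 4 ^ 2 - X 5 * C s₁ * X 4 * X 3
        - X 5 ^ 2 * (C c₂ * X 3 ^ 2 + C c₃ * X 3 * X 2 + C c₄ * X 2 ^ 2)) =
      -(Polynomial.X ^ 2 + (Polynomial.C (dP4S s₁) * Polynomial.X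
        - Polynomial.C (dP4N c₂ c₃ c₄))) := by
  simp [dP4Regroup, dP4S, dP4N, Polynomial.algebraMap_apply, MvPolynomial.algebraMap_apply]
  ring

lemma dP4Regroup_F₂ (s₀ a₁ a₂ b₁ b₂ : k) :
    dP4Regroup (X 2 * X 4 - X 5 * (C s₀ * X 3 ^ 2 + C a₁ * X 0 * X 3 + C a₂ * X 0 ^ 2
        + C b₁ * X 1 * X 3 + C b₂ * X 1 ^ 2)) =
      Polynomial.C (X 2) * Polynomial.X - Polynomial.C (dP4E s₀ a₁ a₂ b₁ b₂) := by
  simp [dP4Regroup, dP4E, Polynomial.algebraMap_apply, MvPolynomial.algebraMap_apply]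

lemma dP4_cancel_prime (s₀ s₁ a₁ a₂ b₁ b₂ c₂ c₃ c₄ : k) (p : Polynomial k) (hp : Prime p)
    (g : MvPolynomial (Fin 6) k)
    (h : Polynomial.aeval (X 5 : MvPolynomial (Fin 6) k) p * g ∈
      dP4Ideal k s₀ s₁ a₁ a₂ b₁ b₂ c₂ c₃ c₄) :
    g ∈ dP4Ideal k s₀ s₁ a₁ a₂ b₁ b₂ c₂ c₃ c₄ := by
  obtain ⟨a, b, hab⟩ := Ideal.mem_span_pair.mp h
  have h1 := congrArg dP4Regroup hab
  rw [map_add, map_mul, map_mul, map_mul, dP4Regroup_aeval, dP4Regroup_F₁, dP4Regroup_F₂] at h1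
  obtain ⟨c, d, hcd⟩ := cancel_prime_of_norm _ _ _ _ (C p) ((prime_C_iff _).mpr hp)
    (dP4_not_dvd_norm s₀ s₁ a₁ a₂ b₁ b₂ c₂ c₃ c₄ p hp) (dP4Regroup g) (-dP4Regroup a)
    (dP4Regroup b) (by linear_combination -h1)
  refine Ideal.mem_span_pair.mpr ⟨dP4Flatten (-c), dP4Flatten d, ?_⟩
  -- The identity holds after regrouping the variables and is transported back.
  have h2 := congrArg₂ (fun P Q => -c * P + d * Q) (dP4Regroup_F₁ s₁ c₂ c₃ c₄)
    (dP4Regroup_F₂ s₀ a₁ a₂ b₁ b₂)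
  beta_reduce at h2
  have h3 := congrArg dP4Flatten (h2.trans (Eq.trans (by ring) hcd.symm))
  rwa [map_add, map_mul, map_mul, dP4Flatten_regroup, dP4Flatten_regroup,
    dP4Flatten_regroup] at h3

/-- The quotient ring has no `k[t]`-torsion. -/
lemma dP4_cancel (s₀ s₁ a₁ a₂ b₁ b₂ c₂ c₃ c₄ : k) (p : Polynomial k) (hp : p ≠ 0)
    (g : MvPolynomial (Fin 6) k)
    (h : Polynomial.aeval (X 5 : MvPolynomial (Fin 6) k) p * g ∈
      dP4Ideal k s₀ s₁ a₁ a₂ b₁ b₂ c₂ c₃ c₄) :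
    g ∈ dP4Ideal k s₀ s₁ a₁ a₂ b₁ b₂ c₂ c₃ c₄ := by
  induction p using UniqueFactorizationMonoid.induction_on_prime with
  | h₁ => exact absurd rfl hp
  | h₂ p hu =>
    exact (Ideal.unit_mul_mem_iff_mem _
      (hu.map (Polynomial.aeval (X 5 : MvPolynomial (Fin 6) k)))).mp h
  | h₃ q p hq hprime ih =>
    apply ih hq
    apply dP4_cancel_prime _ _ _ _ _ _ _ _ _ p hprime
    rwa [map_mul, mul_assoc] at h

end Coordinates

theorem dP4_deformation_flat (k : Type*) [Field k] (s₀ s₁ a₁ a₂ b₁ b₂ c₂ c₃ c₄ : k) :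
    RingHom.Flat
      ((Polynomial.aeval (R := k) (A := MvPolynomial (Fin 6) k ⧸ dP4Ideal k s₀ s₁ a₁ a₂ b₁ b₂ c₂ c₃ c₄)
          ((Ideal.Quotient.mk (dP4Ideal k s₀ s₁ a₁ a₂ b₁ b₂ c₂ c₃ c₄)) (X 5))).toRingHom) := by
  rw [RingHom.Flat]
  let _ : Algebra (Polynomial k)
      (MvPolynomial (Fin 6) k ⧸ dP4Ideal k s₀ s₁ a₁ a₂ b₁ b₂ c₂ c₃ c₄) :=
    ((Polynomial.aeval (R := k)
      (A := MvPolynomial (Fin 6) k ⧸ dP4Ideal k s₀ s₁ a₁ a₂ b₁ b₂ c₂ c₃ c₄)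
      ((Ideal.Quotient.mk (dP4Ideal k s₀ s₁ a₁ a₂ b₁ b₂ c₂ c₃ c₄)) (X 5))).toRingHom).toAlgebra
  rw [Module.Flat.flat_iff_torsion_eq_bot_of_isBezout, eq_bot_iff]
  rintro m ⟨⟨p, hp⟩, hpm⟩
  obtain ⟨g, rfl⟩ := Ideal.Quotient.mk_surjective m
  rw [Submodule.mem_bot, Ideal.Quotient.eq_zero_iff_mem]
  apply dP4_cancel _ _ _ _ _ _ _ _ _ p (nonZeroDivisors.ne_zero hp)
  have hmk : Polynomial.aeval (R := k)
      ((Ideal.Quotient.mk (dP4Ideal k s₀ s₁ a₁ a₂ b₁ b₂ c₂ c₃ c₄)) (X 5)) p =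
      Ideal.Quotient.mk (dP4Ideal k s₀ s₁ a₁ a₂ b₁ b₂ c₂ c₃ c₄)
        (Polynomial.aeval (X 5) p) :=
    Polynomial.aeval_algHom_apply
      (Ideal.Quotient.mkₐ k (dP4Ideal k s₀ s₁ a₁ a₂ b₁ b₂ c₂ c₃ c₄)) (X 5) p
  rw [← Ideal.Quotient.eq_zero_iff_mem, map_mul, ← hmk]
  exact hpm
end

section
/- Flatness of the 3-fold deformation (§5.3.2): the quotient ring k[x, y, z, u, w, t]/(xy − w² + t², zw − tu), regarded as a module over the polynomial subring k[t] generated by t, is flat. -/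
/-!
Flatness of the 3-fold deformation (§5.3.2 of "How to make log structures").

In `k[x, y, z, u, w, t]` (encoded as `MvPolynomial (Fin 6) k` with
`x = X 0`, `y = X 1`, `z = X 2`, `u = X 3`, `w = X 4`, `t = X 5`) consider the
ideal generated by `F₁ = xy − w² + t²` and `F₂ = zw − tu`.  The quotient ring,
regarded as a module over the polynomial subring `k[t]` generated by `t`
(i.e. via the ring homomorphism `Polynomial k → quotient` sending the
polynomial variable to the class of `t`), is flat.
-/

open MvPolynomial

noncomputable def threefoldIdeal (k : Type*) [Field k] :
    Ideal (MvPolynomial (Fin 6) k) :=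
  Ideal.span { X 0 * X 1 - X 4 ^ 2 + X 5 ^ 2, X 2 * X 4 - X 5 * X 3 }

/-!
Over the principal ideal domain `k[t]`, flat means torsion-free, so the point is that no nonzero
`p(t)` is a zero divisor modulo `(F₁, F₂)`.

Both generators have the shape `ab - c`, where `a` and `b` are two variables not occurring in `c`:
`F₂ = zw - tu` over `k[t, u]`, and `F₁ = xy - (w² - t²)` over `k[t, u, z, w]`.  If `r ∈ R` is a
nonzerodivisor modulo an ideal `J` of `R`, then it remains one modulo `J + (ab - c)` in `R[a, b]`
(`mem_hyperbolaIdeal_of_mul_mem`), because `ab - c` is a nonzerodivisor in `S[a, b]` for every ring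
`S`, in particular for `S = R/(J, r)`.  Two applications of this fact, starting from `J = 0` in the
domain `k[t, u]`, prove the claim in the iterated polynomial ring `k[t, u][z, w][x, y]`, from which
it is transported to `k[x, y, z, u, w, t]`.
-/

/-- The polynomial `ab - c` in `R[a][b]`: the inner variable is `a`, the outer one `b`. -/
noncomputable def hyperbola {R : Type*} [CommRing R] (c : R) : Polynomial (Polynomial R) :=
  Polynomial.C Polynomial.X * Polynomial.X - Polynomial.C (Polynomial.C c)

/-- The ideal of `R[a][b]` generated by the ideal `J` of `R` and by `ab - c`. -/
noncomputable def hyperbolaIdeal {R : Type*} [CommRing R] (J : Ideal R) (c : R) :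
    Ideal (Polynomial (Polynomial R)) :=
  (J.map Polynomial.C).map Polynomial.C ⊔ Ideal.span {hyperbola c}

theorem hyperbola_mem_nonZeroDivisors {S : Type*} [CommRing S] (c : S) :
    hyperbola c ∈ nonZeroDivisors (Polynomial (Polynomial S)) := by
  nontriviality S
  -- As a polynomial in `b`, `ab - c` has leading coefficient `a`.
  apply Polynomial.mem_nonZeroDivisors_of_leadingCoeff
  have h : hyperbola c =
      Polynomial.C Polynomial.X * Polynomial.X + Polynomial.C (-Polynomial.C c) := by
    simp [hyperbola, sub_eq_add_neg]
  rw [h, Polynomial.leadingCoeff_linear Polynomial.X_ne_zero]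
  exact Polynomial.monic_X.mem_nonZeroDivisors

theorem mem_map_C_C_iff {R : Type*} [CommRing R] {I : Ideal R}
    {H : Polynomial (Polynomial R)} :
    H ∈ (I.map Polynomial.C).map Polynomial.C ↔ ∀ n m, (H.coeff n).coeff m ∈ I := by
  simp only [Ideal.mem_map_C_iff]

/-- `ab - c` is a nonzerodivisor modulo any ideal extended from `R`, since
`R[a, b]/I R[a, b] = (R/I)[a, b]`. -/
theorem mem_map_of_hyperbola_mul_mem {R : Type*} [CommRing R] {I : Ideal R} {c : R}
    {H : Polynomial (Polynomial R)}
    (h : hyperbola c * H ∈ (I.map Polynomial.C).map Polynomial.C) :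
    H ∈ (I.map Polynomial.C).map Polynomial.C := by
  let q := Polynomial.mapRingHom (Polynomial.mapRingHom (Ideal.Quotient.mk I))
  have hq (G : Polynomial (Polynomial R)) :
      G ∈ (I.map Polynomial.C).map Polynomial.C ↔ q G = 0 := by
    simp [mem_map_C_C_iff, q, Polynomial.ext_iff, Ideal.Quotient.eq_zero_iff_mem]
  rw [hq] at h ⊢
  have hc : q (hyperbola c) = hyperbola (Ideal.Quotient.mk I c) := by
    simp [q, hyperbola]
  rw [map_mul, hc] at h
  exact (mul_left_mem_nonZeroDivisors_eq_zero_iff (hyperbola_mem_nonZeroDivisors _)).1 h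

/-- If `r` is a nonzerodivisor modulo `J`, it is a nonzerodivisor modulo `J + (ab - c)`. -/
theorem mem_hyperbolaIdeal_of_mul_mem {R : Type*} [CommRing R] {J : Ideal R} {r : R} (c : R)
    (hr : ∀ g, r * g ∈ J → g ∈ J) (G : Polynomial (Polynomial R))
    (hG : Polynomial.C (Polynomial.C r) * G ∈ hyperbolaIdeal J c) :
    G ∈ hyperbolaIdeal J c := by
  obtain ⟨j, hj, f, hf, hjf⟩ := Submodule.mem_sup.1 hG
  obtain ⟨H, rfl⟩ := Ideal.mem_span_singleton.1 hf
  -- Modulo `(J, r)` the relation `r G = j + (ab - c) H` reads `(ab - c) H = 0`, so `H = 0` there.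
  have hH : H ∈ ((J ⊔ Ideal.span {r}).map Polynomial.C).map Polynomial.C := by
    apply mem_map_of_hyperbola_mul_mem (c := c)
    rw [← sub_eq_of_eq_add' hjf.symm]
    refine sub_mem (Ideal.mul_mem_right _ _ ?_) (Ideal.map_mono (Ideal.map_mono le_sup_left) hj)
    exact Ideal.mem_map_of_mem _ (Ideal.mem_map_of_mem _
      (Ideal.mem_sup_right (Ideal.mem_span_singleton_self r)))
  rw [Ideal.map_sup, Ideal.map_sup, Ideal.map_span, Ideal.map_span, Set.image_singleton,
    Set.image_singleton] at hH
  obtain ⟨j', hj', f', hfr, rfl⟩ := Submodule.mem_sup.1 hH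
  obtain ⟨H', rfl⟩ := Ideal.mem_span_singleton.1 hfr
  -- Writing `H = j' + r H'` gives `r (G - (ab - c) H') ∈ J`, and `r` cancels coefficientwise.
  have key : G - hyperbola c * H' ∈ (J.map Polynomial.C).map Polynomial.C := by
    have h1 : Polynomial.C (Polynomial.C r) * (G - hyperbola c * H') ∈
        (J.map Polynomial.C).map Polynomial.C := by
      have h2 : Polynomial.C (Polynomial.C r) * (G - hyperbola c * H') = j + hyperbola c * j' := by
        linear_combination -hjf
      rw [h2]
      exact add_mem hj (Ideal.mul_mem_left _ _ hj')
    rw [mem_map_C_C_iff] at h1 ⊢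
    intro n m
    apply hr
    simpa only [Polynomial.coeff_C_mul] using h1 n m
  rw [← sub_add_cancel G (hyperbola c * H')]
  exact add_mem (Ideal.mem_sup_left key)
    (Ideal.mem_sup_right (Ideal.mul_mem_right _ _ (Ideal.mem_span_singleton_self _)))

/-- The polynomial ring `R[a, b]`, encoded as `R[a][b]`.  It is a separate type, equipped with its
ring structure only, so that instance search stays cheap when the construction is iterated. -/
def DoublePoly (R : Type*) [CommRing R] : Type _ := Polynomial (Polynomial R)

namespace DoublePoly

noncomputable instance (R : Type*) [CommRing R] : CommRing (DoublePoly R) :=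
  inferInstanceAs (CommRing (Polynomial (Polynomial R)))

/-- The inclusion of constants `R → R[a, b]`. -/
noncomputable def const (R : Type*) [CommRing R] : R →+* DoublePoly R :=
  (Polynomial.C.comp Polynomial.C : R →+* Polynomial (Polynomial R))

/-- The first variable of `R[a, b]`. -/
noncomputable def fstVar (R : Type*) [CommRing R] : DoublePoly R :=
  (Polynomial.C Polynomial.X : Polynomial (Polynomial R))

/-- The second variable of `R[a, b]`. -/
noncomputable def sndVar (R : Type*) [CommRing R] : DoublePoly R :=
  (Polynomial.X : Polynomial (Polynomial R))

/-- The ring homomorphism `R[a, b] → S` given by `f` on constants, `a ↦ x` and `b ↦ y`. -/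
noncomputable def lift {R S : Type*} [CommRing R] [CommRing S] (f : R →+* S) (x y : S) :
    DoublePoly R →+* S :=
  (Polynomial.eval₂RingHom (Polynomial.eval₂RingHom f x) y : Polynomial (Polynomial R) →+* S)

section

variable {R S : Type*} [CommRing R] [CommRing S] (f : R →+* S) (x y : S)

@[simp]
theorem lift_const (r : R) : lift f x y (const R r) = f r := by
  change Polynomial.eval₂RingHom (Polynomial.eval₂RingHom f x) y
    (Polynomial.C (Polynomial.C r)) = _
  simp

@[simp]
theorem lift_fstVar : lift f x y (fstVar R) = x := by
  change Polynomial.eval₂RingHom (Polynomial.eval₂RingHom f x) y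
    (Polynomial.C Polynomial.X) = _
  simp

@[simp]
theorem lift_sndVar : lift f x y (sndVar R) = y := by
  change Polynomial.eval₂RingHom (Polynomial.eval₂RingHom f x) y Polynomial.X = _
  simp

end

/-- The ideal of `R[a, b]` generated by `J` and `ab - c`; `hyperbolaIdeal` seen in
`DoublePoly R`. -/
noncomputable def relIdeal {R : Type*} [CommRing R] (J : Ideal R) (c : R) :
    Ideal (DoublePoly R) :=
  J.map (const R) ⊔ Ideal.span {fstVar R * sndVar R - const R c}

theorem mem_relIdeal_of_mul_mem {R : Type*} [CommRing R] {J : Ideal R} {r : R} (c : R)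
    (hr : ∀ g, r * g ∈ J → g ∈ J) (G : DoublePoly R)
    (hG : const R r * G ∈ relIdeal J c) : G ∈ relIdeal J c := by
  have h : relIdeal J c = hyperbolaIdeal J c := by
    rw [hyperbolaIdeal, Ideal.map_map]
    rfl
  rw [h] at hG ⊢
  exact mem_hyperbolaIdeal_of_mul_mem c hr G hG

end DoublePoly

open DoublePoly

/-- The polynomial ring `k[t, u]`, encoded as `k[t][u]`. -/
abbrev BasePoly (k : Type*) [Field k] : Type _ := Polynomial (Polynomial k)

/-- The polynomial ring `k[t, u][z, w]`. -/
abbrev MidPoly (k : Type*) [Field k] : Type _ := DoublePoly (BasePoly k)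

/-- The polynomial ring `k[t, u][z, w][x, y]`. -/
abbrev IterPoly (k : Type*) [Field k] : Type _ := DoublePoly (MidPoly k)

/-- The element `tu` of `k[t, u]`. -/
noncomputable def baseConst (k : Type*) [Field k] : BasePoly k :=
  Polynomial.C Polynomial.X * Polynomial.X

/-- The element `w² - t²` of `k[t, u][z, w]`. -/
noncomputable def midConst (k : Type*) [Field k] : MidPoly k :=
  sndVar (BasePoly k) ^ 2 - const (BasePoly k) (Polynomial.C Polynomial.X) ^ 2

/-- The ideal `(xy - (w² - t²), zw - tu)` of `k[t, u][z, w][x, y]`. -/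
noncomputable def iterIdeal (k : Type*) [Field k] : Ideal (IterPoly k) :=
  relIdeal (relIdeal ⊥ (baseConst k)) (midConst k)

/-- The inclusion of `k[t, u]` into `k[t, u][z, w][x, y]`. -/
noncomputable def iterC (k : Type*) [Field k] : BasePoly k →+* IterPoly k :=
  (const (MidPoly k)).comp (const (BasePoly k))

theorem mem_iterIdeal_of_mul_mem {k : Type*} [Field k] {p : Polynomial k} (hp : p ≠ 0)
    (G : IterPoly k) (hG : iterC k (Polynomial.C p) * G ∈ iterIdeal k) : G ∈ iterIdeal k := by
  refine mem_relIdeal_of_mul_mem (midConst k)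
    (mem_relIdeal_of_mul_mem (r := Polynomial.C p) _ fun g hg => ?_) G hG
  simpa [hp] using hg

/-- The map `k[x, y, z, u, w, t] → k[t, u][z, w][x, y]` sending each variable to its namesake. -/
noncomputable def toIter (k : Type*) [Field k] : MvPolynomial (Fin 6) k →+* IterPoly k :=
  MvPolynomial.eval₂Hom ((iterC k).comp (Polynomial.C.comp Polynomial.C))
    ![fstVar (MidPoly k),
      sndVar (MidPoly k),
      const (MidPoly k) (fstVar (BasePoly k)),
      iterC k Polynomial.X,
      const (MidPoly k) (sndVar (BasePoly k)),
      iterC k (Polynomial.C Polynomial.X)]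

/-- The map `k[t, u][z, w][x, y] → k[x, y, z, u, w, t]` sending each variable to its namesake. -/
noncomputable def ofIter (k : Type*) [Field k] : IterPoly k →+* MvPolynomial (Fin 6) k :=
  lift (lift (Polynomial.eval₂RingHom (Polynomial.eval₂RingHom MvPolynomial.C (X 5)) (X 3))
    (X 2) (X 4)) (X 0) (X 1)

theorem ofIter_toIter {k : Type*} [Field k] (g : MvPolynomial (Fin 6) k) :
    ofIter k (toIter k g) = g := by
  have h : (ofIter k).comp (toIter k) = RingHom.id _ := by
    apply MvPolynomial.ringHom_ext
    · intro r
      simp [ofIter, toIter, iterC]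
    · intro i
      fin_cases i <;> simp [ofIter, toIter, iterC]
  exact DFunLike.congr_fun h g

theorem iterIdeal_eq_span (k : Type*) [Field k] :
    iterIdeal k = Ideal.span
      {fstVar (MidPoly k) * sndVar (MidPoly k) - const (MidPoly k) (midConst k),
        const (MidPoly k) (fstVar (BasePoly k) * sndVar (BasePoly k) -
          const (BasePoly k) (baseConst k))} := by
  rw [iterIdeal, relIdeal, relIdeal, Ideal.map_bot, bot_sup_eq, Ideal.map_span,
    Set.image_singleton, Ideal.span_insert, sup_comm]

theorem toIter_mem {k : Type*} [Field k] {g : MvPolynomial (Fin 6) k}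
    (hg : g ∈ threefoldIdeal k) : toIter k g ∈ iterIdeal k := by
  have h : threefoldIdeal k ≤ (iterIdeal k).comap (toIter k) := by
    rw [threefoldIdeal, Ideal.span_le, iterIdeal_eq_span]
    rintro _ (rfl | rfl)
    · apply Ideal.subset_span
      left
      simp [toIter, iterC, midConst]
      ring
    · apply Ideal.subset_span
      right
      simp [toIter, iterC, baseConst]
  exact h hg

theorem ofIter_mem {k : Type*} [Field k] {G : IterPoly k}
    (hG : G ∈ iterIdeal k) : ofIter k G ∈ threefoldIdeal k := by
  have h : iterIdeal k ≤ (threefoldIdeal k).comap (ofIter k) := by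
    rw [threefoldIdeal, iterIdeal_eq_span, Ideal.span_le]
    rintro _ (rfl | rfl)
    · apply Ideal.subset_span
      left
      simp [ofIter, midConst]
      ring
    · apply Ideal.subset_span
      right
      simp [ofIter, baseConst]
  exact h hG

theorem toIter_aeval {k : Type*} [Field k] (p : Polynomial k) :
    toIter k (Polynomial.aeval (X 5) p) = iterC k (Polynomial.C p) := by
  have h : (toIter k).comp
      (Polynomial.aeval (R := k) (X 5 : MvPolynomial (Fin 6) k)).toRingHom =
        (iterC k).comp Polynomial.C := by
    apply Polynomial.ringHom_ext
    · intro a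
      simp [toIter, MvPolynomial.algebraMap_eq]
    · simp [toIter]
  exact DFunLike.congr_fun h p

theorem threefold_deformation_flat (k : Type*) [Field k] :
    RingHom.Flat
      ((Polynomial.aeval (R := k) (A := MvPolynomial (Fin 6) k ⧸ threefoldIdeal k)
          ((Ideal.Quotient.mk (threefoldIdeal k)) (X 5))).toRingHom) := by
  let φ := (Polynomial.aeval (R := k) (A := MvPolynomial (Fin 6) k ⧸ threefoldIdeal k)
    ((Ideal.Quotient.mk (threefoldIdeal k)) (X 5))).toRingHom
  change φ.Flat
  let _ : Algebra (Polynomial k) (MvPolynomial (Fin 6) k ⧸ threefoldIdeal k) := φ.toAlgebra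
  have : Module.IsTorsionFree (Polynomial k) (MvPolynomial (Fin 6) k ⧸ threefoldIdeal k) := by
    apply Module.IsTorsionFree.of_smul_eq_zero
    intro p m hpm
    rw [or_iff_not_imp_left]
    intro hp
    obtain ⟨g, rfl⟩ := Ideal.Quotient.mk_surjective m
    have hφ : φ p = Ideal.Quotient.mk (threefoldIdeal k) (Polynomial.aeval (X 5) p) :=
      Polynomial.aeval_algHom_apply (Ideal.Quotient.mkₐ k (threefoldIdeal k)) (X 5) p
    rw [Algebra.smul_def, RingHom.algebraMap_toAlgebra, hφ, ← map_mul,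
      Ideal.Quotient.eq_zero_iff_mem] at hpm
    rw [Ideal.Quotient.eq_zero_iff_mem, ← ofIter_toIter g]
    apply ofIter_mem
    apply mem_iterIdeal_of_mul_mem hp
    rw [← toIter_aeval, ← map_mul]
    exact toIter_mem hpm
  exact (inferInstance : Module.Flat (Polynomial k) (MvPolynomial (Fin 6) k ⧸ threefoldIdeal k))
end

section
/- Smoothing claim of §5.3.2: for every c ∈ k with c ≠ 0, the fibre ring B_c = k[x, y, z, u, w]/(xy − w² + c², zw − c·u) is a smooth k-algebra; in particular, the family 𝔛 → 𝔸¹ of equation (5.3) is a smoothing of the log singular 3-fold X = V(xy − w², zw). -/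
/-!
Smoothing claim of §5.3.2 of "How to make log structures": for `k` a field with
`char k ≠ 2` and `c ∈ k` nonzero, the fibre ring
`B_c = k[x, y, z, u, w]/(xy − w² + c², zw − c·u)` is a smooth `k`-algebra.
Variables are encoded as `x = X 0`, `y = X 1`, `z = X 2`, `u = X 3`, `w = X 4`
in `MvPolynomial (Fin 5) k`.
-/

/-!
Finite presentation is immediate, so the content is the infinitesimal lifting property, which is
checked by an explicit Newton step. Let `I ⊆ B` be an ideal with `I ^ 2 = 0`, and lift a point of
the fibre over `B ⧸ I` arbitrarily to `(x, y, z, u, w)` in `B`. The error `e = xy - w² + c²` lies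
in `I`, so `e² = 0`. As `xy - w²` is homogeneous of degree two, rescaling `x`, `y`, `w` by
`1 + e / (2c²)` changes it to `(e - c²)(1 + e / c²) = -c²`, which makes the first equation exact;
here `2` and `c` must be invertible. The second equation is then solved by `u = c⁻¹zw`.
-/

open MvPolynomial

noncomputable def fibreIdeal (k : Type*) [Field k] (c : k) :
    Ideal (MvPolynomial (Fin 5) k) :=
  Ideal.span { X 0 * X 1 - X 4 ^ 2 + C c ^ 2, X 2 * X 4 - C c * X 3 }

theorem threefold_fibre_smooth (k : Type u) [Field k]
    (h2 : (2 : k) ≠ 0) (c : k) (hc : c ≠ 0) :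
    Algebra.Smooth k (MvPolynomial (Fin 5) k ⧸ fibreIdeal k c) := by
  have hfp : Algebra.FinitePresentation k (MvPolynomial (Fin 5) k ⧸ fibreIdeal k c) :=
    Algebra.FinitePresentation.quotient
      (Submodule.fg_span (Set.toFinite _))
  refine ⟨Algebra.FormallySmooth.of_comp_surjective ?_, hfp⟩
  intro B _ _ I hI g
  let q := Ideal.Quotient.mkₐ k (fibreIdeal k c)
  choose b hb using fun i : Fin 5 => Ideal.Quotient.mk_surjective (g (q (X i)))
  have hker : ∀ p ∈ fibreIdeal k c, g (q p) = 0 := fun p hp => by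
    have : q p = 0 := Ideal.Quotient.eq_zero_iff_mem.mpr hp
    rw [this, map_zero]
  have hqC : ∀ r : k, g (q (C r)) = Ideal.Quotient.mk I (algebraMap k B r) := fun r => by
    rw [← MvPolynomial.algebraMap_eq, AlgHom.commutes, AlgHom.commutes]
    rfl
  have h₁ := hker (X 0 * X 1 - X 4 ^ 2 + C c ^ 2) (Ideal.subset_span (by simp))
  have h₂ := hker (X 2 * X 4 - C c * X 3) (Ideal.subset_span (by simp))
  simp only [map_add, map_sub, map_mul, map_pow, hqC, ← hb] at h₁ h₂
  have hcc : algebraMap k B c * algebraMap k B c⁻¹ = 1 := by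
    rw [← map_mul, mul_inv_cancel₀ hc, map_one]
  obtain ⟨s, hs⟩ : ∃ s : B, 2 * s * algebraMap k B c ^ 2 = 1 :=
    ⟨algebraMap k B (2 * c ^ 2)⁻¹, by
      rw [← map_ofNat (algebraMap k B) 2, ← map_pow, ← map_mul, ← map_mul,
        show (2 : k) * (2 * c ^ 2)⁻¹ * c ^ 2 = 1 by field_simp, map_one]⟩
  generalize hd : algebraMap k B c = d at *
  generalize algebraMap k B c⁻¹ = d' at *
  obtain ⟨e, he⟩ : ∃ e, e = b 0 * b 1 - b 4 ^ 2 + d ^ 2 := ⟨_, rfl⟩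
  have heI : e ∈ I := by
    rw [← Ideal.Quotient.eq_zero_iff_mem, he]
    simpa using h₁
  have hee : e ^ 2 = 0 := by
    have : e ^ 2 ∈ I ^ 2 := Ideal.pow_mem_pow heI 2
    rwa [hI] at this
  have he0 : Ideal.Quotient.mk I e = 0 := Ideal.Quotient.eq_zero_iff_mem.mpr heI
  -- The Newton step: `s = 1 / (2c²)` rescales `x`, `y`, `w`, and `u` is solved for.
  let v : Fin 5 → B :=
    ![b 0 * (1 + s * e), b 1 * (1 + s * e), b 2, d' * (b 2 * (b 4 * (1 + s * e))),
      b 4 * (1 + s * e)]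
  have hv : ∀ p ∈ fibreIdeal k c, aeval v p = 0 := by
    have : fibreIdeal k c ≤ RingHom.ker (aeval (R := k) v) := by
      refine Ideal.span_le.mpr ?_
      rintro p (rfl | rfl)
      · simp only [SetLike.mem_coe, RingHom.mem_ker, map_add, map_sub, map_mul, map_pow, aeval_X,
          aeval_C, hd]
        simp only [v, Matrix.cons_val]
        have h : b 0 * b 1 - b 4 ^ 2 = e - d ^ 2 := by rw [he]; ring
        linear_combination (1 + s * e) ^ 2 * h - e * hs + (2 * s + s ^ 2 * e - s ^ 2 * d ^ 2) * hee
      · simp only [SetLike.mem_coe, RingHom.mem_ker, map_sub, map_mul, aeval_X, aeval_C, hd]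
        simp only [v, Matrix.cons_val]
        linear_combination -(b 2 * (b 4 * (1 + s * e))) * hcc
    exact this
  refine ⟨Ideal.Quotient.liftₐ _ (aeval v) hv, ?_⟩
  apply Ideal.Quotient.algHom_ext
  ext i
  suffices Ideal.Quotient.mk I (v i) = Ideal.Quotient.mk I (b i) by
    rw [hb] at this
    refine Eq.trans ?_ this
    exact congrArg (Ideal.Quotient.mk I) (aeval_X v i)
  have hcc' := congrArg (Ideal.Quotient.mk I) hcc
  simp only [map_mul, map_one] at hcc'
  fin_cases i
  · simp [v, he0]
  · simp [v, he0]
  · simp [v]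
  · simp only [v, Fin.reduceFinMk, Matrix.cons_val, map_mul, map_add, map_one, he0]
    linear_combination Ideal.Quotient.mk I d' * h₂ + Ideal.Quotient.mk I (b 3) * hcc'
  · simp [v, he0]
end

section
/- Presentation of the module of the reflexive sheaf L₁ = j_*L_{1,U} (§5.2): the R-submodule M₁ of k[x, u] × k[y, u] generated by e₁ = (1, u) and e₂ = (0, y) has presentation M₁ ≅ R²/⟨(y, −u), (0, x)⟩. Equivalently, the R-linear map R² → k[x, u] × k[y, u] sending the two standard basis vectors to e₁ = (1, u) and e₂ = (0, y) has kernel equal to the submodule generated by (y, −u) and (0, x); that is, all relations among e₁, e₂ are generated by y·e₁ = u·e₂ and x·e₂ = 0. -/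
/-!
Lift an element of the kernel of `relMap` to polynomials `(p, q)`. The first component says that
`p` vanishes on `y = 0`, so `p = y * a`. On `x = 0` the second component then reads
`y * (u * a + q) = 0`; since `k[y, u]` is a domain, `q + u * a` vanishes on `x = 0`, so
`q = x * b - u * a` and `(p, q) = a • (y, -u) + b • (0, x)`. The two divisibility facts
(`y_dvd_of_restrict_eq_zero`, `x_dvd_of_restrict_eq_zero`) hold because each restriction has a
section that inverts it modulo the variable being set to zero.
-/

/-!
Presentation of the module of the reflexive sheaf `L₁ = j_* L_{1,U}` (§5.2 of
"How to make log structures").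

`R = k[x, y, u]/(xy)` is encoded as `MvPolynomial (Fin 3) k ⧸ span {X 0 * X 1}`
(`x = X 0`, `y = X 1`, `u = X 2`).  The normalization
`k[x, u] × k[y, u]` is encoded as `MvPolynomial (Fin 2) k × MvPolynomial (Fin 2) k`
(first factor: `x = X 0`, `u = X 1`; second factor: `y = X 0`, `u = X 1`), an
`R`-module via the two quotient homomorphisms `R → k[x, u]` (`y ↦ 0`) and
`R → k[y, u]` (`x ↦ 0`).

The `R`-linear map `R² → k[x, u] × k[y, u]` sending the standard basis vectors
to `e₁ = (1, u)` and `e₂ = (0, y)` has kernel the submodule generated by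
`(y, −u)` and `(0, x)`; i.e. all relations among `e₁, e₂` are generated by
`y·e₁ = u·e₂` and `x·e₂ = 0`, so `M₁ ≅ R²/⟨(y, −u), (0, x)⟩`.
-/

open MvPolynomial

set_option maxHeartbeats 1000000
set_option synthInstance.maxHeartbeats 400000

noncomputable def ncIdeal (k : Type*) [Field k] : Ideal (MvPolynomial (Fin 3) k) :=
  Ideal.span {X 0 * X 1}

/-- The coordinate ring `R = k[x,y,u]/(xy)` of the normal crossing surface. -/
noncomputable abbrev NCRing (k : Type*) [Field k] :=
  MvPolynomial (Fin 3) k ⧸ ncIdeal k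

/-- The map `k[x,y,u] → k[x,u] × k[y,u]` to the normalization. -/
noncomputable def toNorm (k : Type*) [Field k] :
    MvPolynomial (Fin 3) k →+* MvPolynomial (Fin 2) k × MvPolynomial (Fin 2) k :=
  ((aeval ![X 0, 0, X 1]).toRingHom).prod ((aeval ![0, X 0, X 1]).toRingHom)

lemma toNorm_vanish (k : Type*) [Field k] :
    ∀ a ∈ ncIdeal k, toNorm k a = 0 := by
  intro a ha
  obtain ⟨c, rfl⟩ := Ideal.mem_span_singleton'.mp (by simpa [ncIdeal] using ha)
  have h0 : toNorm k (X 0 * X 1) = 0 := by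
    simp [toNorm, Prod.ext_iff]
  rw [map_mul, h0, mul_zero]

/-- The induced map `R → k[x,u] × k[y,u]`. -/
noncomputable def toNormBar (k : Type*) [Field k] :
    NCRing k →+* MvPolynomial (Fin 2) k × MvPolynomial (Fin 2) k :=
  Ideal.Quotient.lift (ncIdeal k) (toNorm k) (toNorm_vanish k)

noncomputable instance normAlgebra (k : Type*) [Field k] :
    Algebra (NCRing k) (MvPolynomial (Fin 2) k × MvPolynomial (Fin 2) k) :=
  (toNormBar k).toAlgebra

/-- The `R`-linear map `R² → k[x,u] × k[y,u]`, `(p, q) ↦ p·e₁ + q·e₂` with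
`e₁ = (1, u)` and `e₂ = (0, y)`. -/
noncomputable def relMap (k : Type*) [Field k] :
    (NCRing k × NCRing k) →ₗ[NCRing k]
      MvPolynomial (Fin 2) k × MvPolynomial (Fin 2) k :=
  (LinearMap.fst (NCRing k) (NCRing k) (NCRing k)).smulRight
      ((1 : MvPolynomial (Fin 2) k), (X 1 : MvPolynomial (Fin 2) k)) +
    (LinearMap.snd (NCRing k) (NCRing k) (NCRing k)).smulRight
      ((0 : MvPolynomial (Fin 2) k), (X 0 : MvPolynomial (Fin 2) k))

/-- If `s ∘ φ` fixes every variable modulo `f`, then it is the identity modulo `f`, so the kernel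
of `φ` consists of multiples of `f`. -/
lemma dvd_of_section {k : Type*} [Field k] (f : MvPolynomial (Fin 3) k)
    (φ : MvPolynomial (Fin 3) k →ₐ[k] MvPolynomial (Fin 2) k)
    (s : MvPolynomial (Fin 2) k →ₐ[k] MvPolynomial (Fin 3) k)
    (h : ∀ i, f ∣ X i - s (φ (X i))) (p : MvPolynomial (Fin 3) k) (hp : φ p = 0) : f ∣ p := by
  have key : (Ideal.Quotient.mkₐ k (Ideal.span {f})).comp (s.comp φ) =
      Ideal.Quotient.mkₐ k (Ideal.span {f}) := by
    refine MvPolynomial.algHom_ext fun i => ?_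
    exact (Ideal.Quotient.eq.mpr (Ideal.mem_span_singleton.mpr (h i))).symm
  have hp' := DFunLike.congr_fun key p
  simp only [AlgHom.comp_apply, hp, map_zero] at hp'
  exact Ideal.mem_span_singleton.mp (Ideal.Quotient.eq_zero_iff_mem.mp hp'.symm)

/-- The kernel of `k[x,y,u] → k[x,u]`, `y ↦ 0`, is generated by `y`. -/
lemma y_dvd_of_restrict_eq_zero {k : Type*} [Field k] (p : MvPolynomial (Fin 3) k)
    (hp : aeval ![(X 0 : MvPolynomial (Fin 2) k), 0, X 1] p = 0) : X 1 ∣ p := by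
  refine dvd_of_section _ _ (aeval ![X 0, X 2]) (fun i => ?_) p hp
  fin_cases i <;> simp

/-- The kernel of `k[x,y,u] → k[y,u]`, `x ↦ 0`, is generated by `x`. -/
lemma x_dvd_of_restrict_eq_zero {k : Type*} [Field k] (p : MvPolynomial (Fin 3) k)
    (hp : aeval ![(0 : MvPolynomial (Fin 2) k), X 0, X 1] p = 0) : X 0 ∣ p := by
  refine dvd_of_section _ _ (aeval ![X 1, X 2]) (fun i => ?_) p hp
  fin_cases i <;> simp

/-- On classes of polynomials `p, q`, the two components of `relMap` are `p|_{y=0}` and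
`u * p|_{x=0} + y * q|_{x=0}`. -/
lemma relMap_mk (k : Type*) [Field k] (p q : MvPolynomial (Fin 3) k) :
    relMap k (Ideal.Quotient.mk (ncIdeal k) p, Ideal.Quotient.mk (ncIdeal k) q) =
      (aeval ![(X 0 : MvPolynomial (Fin 2) k), 0, X 1] p,
        aeval ![(0 : MvPolynomial (Fin 2) k), X 0, X 1] p * X 1 +
          aeval ![(0 : MvPolynomial (Fin 2) k), X 0, X 1] q * X 0) := by
  have hs : ∀ (a : MvPolynomial (Fin 3) k) (v : MvPolynomial (Fin 2) k × MvPolynomial (Fin 2) k),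
      Ideal.Quotient.mk (ncIdeal k) a • v = toNorm k a * v := fun a v => rfl
  simp only [relMap, LinearMap.add_apply, LinearMap.smulRight_apply, LinearMap.fst_apply,
    LinearMap.snd_apply, hs]
  simp [toNorm]

theorem reflexive_sheaf_module_presentation (k : Type*) [Field k] :
    LinearMap.ker (relMap k) =
      Submodule.span (NCRing k)
        {((Ideal.Quotient.mk (ncIdeal k)) (X 1), -((Ideal.Quotient.mk (ncIdeal k)) (X 2))),
         (0, (Ideal.Quotient.mk (ncIdeal k)) (X 0))} := by
  refine le_antisymm ?_ ?_
  · rintro ⟨p, q⟩ hpq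
    obtain ⟨p, rfl⟩ := Ideal.Quotient.mk_surjective p
    obtain ⟨q, rfl⟩ := Ideal.Quotient.mk_surjective q
    rw [LinearMap.mem_ker, relMap_mk, Prod.mk_eq_zero] at hpq
    obtain ⟨h1, h2⟩ := hpq
    obtain ⟨a, rfl⟩ := y_dvd_of_restrict_eq_zero p h1
    -- Cancelling `y` in `u * (y * a) + y * q = 0` on `X₂` shows that `x` divides `q + u * a`.
    have h3 : aeval ![(0 : MvPolynomial (Fin 2) k), X 0, X 1] (q + X 2 * a) = 0 := by
      refine (mul_eq_zero.mp ?_).resolve_left (X_ne_zero (R := k) (0 : Fin 2))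
      refine Eq.trans ?_ h2
      simp
      ring
    obtain ⟨b, hb⟩ := x_dvd_of_restrict_eq_zero _ h3
    rw [Submodule.mem_span_pair]
    refine ⟨Ideal.Quotient.mk _ a, Ideal.Quotient.mk _ b, ?_⟩
    obtain rfl : q = X 0 * b - X 2 * a := eq_sub_of_add_eq hb
    simp only [Prod.smul_mk, Prod.mk_add_mk, smul_eq_mul, map_mul, map_sub, Prod.mk.injEq]
    constructor <;> ring
  · rw [Submodule.span_le]
    rintro v (rfl | rfl)
    · rw [← map_neg, SetLike.mem_coe, LinearMap.mem_ker, relMap_mk]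
      simp [mul_comm]
    · rw [← map_zero (Ideal.Quotient.mk (ncIdeal k)), SetLike.mem_coe, LinearMap.mem_ker, relMap_mk]
      simp
end
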